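/- For every s-graphon μ and every k ∈ ℕ, the set C̃(μ,k) = {μ_M : M ∈ C(μ,k)} equals the intersection of the shape C(μ) with the set {μ_M : M ∈ M_k*}, where M_k* is the set of symmetric k-by-k matrices with non-negative entries whose entries sum to 1. -/

import Mathlib

open MeasureTheory Topology Filter

noncomputable section

/-- The unit square `[0,1]²`. -/
abbrev Sq : Type := unitInterval × unitInterval

/-- Convergence of a sequence of subsets in the Vietoris topology
(upper + lower Vietoris convergence). -/
def VietorisTendsto {X : Type*} [TopologicalSpace X] (A : ℕ → Set X) (B : Set X) : Prop :=
  (∀ U : Set X, IsOpen U → B ⊆ U → ∀ᶠ n in atTop, A n ⊆ U) ∧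
  (∀ U : Set X, IsOpen U → (B ∩ U).Nonempty → ∀ᶠ n in atTop, (A n ∩ U).Nonempty)

/-- A measure on the unit square is symmetric if it is invariant under the coordinate swap. -/
def IsSymmSq (μ : Measure Sq) : Prop := μ.map Prod.swap = μ

/-- s-graphons: symmetric Borel probability measures on the unit square,
with the weak topology. -/
def SGraphon : Type := {μ : ProbabilityMeasure Sq // IsSymmSq (μ : Measure Sq)}

instance : TopologicalSpace SGraphon :=
  inferInstanceAs (TopologicalSpace {μ : ProbabilityMeasure Sq // IsSymmSq (μ : Measure Sq)})

/-- The underlying measure of an s-graphon. -/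
def SGraphon.toMeasure (μ : SGraphon) : Measure Sq := (μ.1 : Measure Sq)

/-- A non-negative bounded Borel function on the unit square is fairly distributed
if all its horizontal and vertical sections integrate (w.r.t. Lebesgue measure) to 1. -/
structure FairlyDistributed (f : Sq → ℝ) : Prop where
  measurable : Measurable f
  nonneg : ∀ p, 0 ≤ f p
  bounded : ∃ C : ℝ, ∀ p, f p ≤ C
  row : ∀ x : unitInterval, ∫ v, f (x, v) = 1
  col : ∀ y : unitInterval, ∫ u, f (u, y) = 1

/-- The density `φ(f,μ)`. -/
def phiFn (f : Sq → ℝ) (μ : Measure Sq) (p : Sq) : ℝ :=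
  ∫ q, f (q.1, p.1) * f (q.2, p.2) ∂μ

/-- The measure `Φ(f,μ)`, with density `φ(f,μ)` w.r.t. 2-dimensional Lebesgue measure. -/
def PhiMeas (f : Sq → ℝ) (μ : Measure Sq) : Measure Sq :=
  volume.withDensity fun p => ENNReal.ofReal (phiFn f μ p)

/-- The shape of a measure `μ` on the unit square: the weak closure of the set of
(s-graphons corresponding to) the measures `Φ(f,μ)`, `f` continuous fairly distributed. -/
def shapeM (μ : Measure Sq) : Set SGraphon :=
  closure {ν : SGraphon | ∃ f : Sq → ℝ, FairlyDistributed f ∧ Continuous f ∧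
    ν.toMeasure = PhiMeas f μ}

/-- The shape `C(μ)` of an s-graphon. -/
def shape (μ : SGraphon) : Set SGraphon := shapeM μ.toMeasure

/-- A fractional partition into `k` parts: non-negative Borel functions on `[0,1]`
summing to the constant function 1, each integrating to `1/k`. -/
def IsFracPartition (k : ℕ) (f : Fin k → unitInterval → ℝ) : Prop :=
  (∀ i, Measurable (f i)) ∧ (∀ i x, 0 ≤ f i x) ∧ (∀ x, ∑ i, f i x = 1) ∧
    ∀ i, ∫ x, f i x = 1 / k

/-- The `k`-shape `C(μ,k)`: the closure in `ℝ^{k×k}` of the set of density matrices of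
fractional partitions into `k` parts. -/
def kShape (μ : Measure Sq) (k : ℕ) : Set (Matrix (Fin k) (Fin k) ℝ) :=
  closure {M | ∃ f : Fin k → unitInterval → ℝ, IsFracPartition k f ∧
    ∀ i j, M i j = ∫ p, f i p.1 * f j p.2 ∂μ}

/-- `M_k^*`: symmetric `k×k` matrices with non-negative entries summing to 1. -/
def Mstar (k : ℕ) : Set (Matrix (Fin k) (Fin k) ℝ) :=
  {M | M.IsSymm ∧ (∀ i j, 0 ≤ M i j) ∧ ∑ i, ∑ j, M i j = 1}

/-- The index `i` (0-based) with `u ∈ [i/k, (i+1)/k)` (and `i = k-1` for `u = 1`). -/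
def gridIdx (k : ℕ) (hk : 0 < k) (u : unitInterval) : Fin k :=
  ⟨min ⌊(u : ℝ) * k⌋₊ (k - 1), lt_of_le_of_lt (min_le_right _ _) (Nat.sub_lt hk one_pos)⟩

/-- The measure `μ_M` associated to a `k×k` matrix `M`: its density w.r.t. 2-dimensional
Lebesgue measure equals `k² M(i,j)` on the square `[i/k,(i+1)/k) × [j/k,(j+1)/k)` (0-based). -/
def muM {k : ℕ} (M : Matrix (Fin k) (Fin k) ℝ) : Measure Sq :=
  if hk : 0 < k then
    volume.withDensity fun p =>
      ENNReal.ofReal ((k : ℝ) ^ 2 * M (gridIdx k hk p.1) (gridIdx k hk p.2))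
  else 0

/-- `C̃(μ,k)`: the `k`-shape of `μ`, interpreted as a set of s-graphons. -/
def kShapeTilde (μ : Measure Sq) (k : ℕ) : Set SGraphon :=
  {ν : SGraphon | ∃ M ∈ kShape μ k, ν.toMeasure = muM M}

/-- The interval `I_i = [i/k, (i+1)/k)` (0-based), with `I_{k-1} = [(k-1)/k, 1]`,
as a subset of `[0,1]`. -/
def Ik (k : ℕ) (i : Fin k) : Set unitInterval :=
  if (i : ℕ) + 1 = k then Subtype.val ⁻¹' Set.Icc (((i : ℕ) : ℝ) / k) 1
  else Subtype.val ⁻¹' Set.Ico (((i : ℕ) : ℝ) / k) ((((i : ℕ) : ℝ) + 1) / k)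

/-!
Integrating `Φ(f,μ)` against the products `pᵢ(u) pⱼ(v)` of a fractional partition `p` amounts to
integrating `μ` against the products of the averages `∫ f(·,u) pᵢ(u) du`, which again form a
fractional partition since `f` is fairly distributed. Density matrices of continuous partitions are
weakly continuous in the measure and dense in the `k`-shape, so `C(ν,k) ⊆ C(μ,k)` for every
`ν ∈ C(μ)`; moreover `M` is the density matrix of `μ_M` for the grid partition.

Conversely, for fractional partitions `c` and `p` the kernel `k ∑ᵢ cᵢ(x) pᵢ(u)` is fairly
distributed, and `Φ` of it has density `k² ∑ᵢⱼ Nᵢⱼ pᵢ(u) pⱼ(v)`, where `N` is the density matrix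
of `c` with respect to `μ`. Letting continuous `c` and `p` vary so that `N → M` and `p` tends almost
everywhere to the grid partition, these measures converge weakly to `μ_M`.
-/

lemma norm_apply_le_one_of_mem_stdSimplex {ι : Type*} [Fintype ι] {x : ι → ℝ}
    (hx : x ∈ stdSimplex ℝ ι) (i : ι) : ‖x i‖ ≤ 1 := by
  rw [Real.norm_of_nonneg (hx.1 i)]
  exact (mem_Icc_of_mem_stdSimplex hx i).2

section ContinuousApproximation

variable {X : Type*} [TopologicalSpace X] [NormalSpace X] [MeasurableSpace X] [BorelSpace X]
  {m : Measure X} [m.WeaklyRegular]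

lemma exists_seq_continuous_tendsto_ae {E : Type*} [NormedAddCommGroup E] [NormedSpace ℝ E]
    {f : X → E} (hf : Integrable f m) :
    ∃ g : ℕ → X → E, (∀ n, Continuous (g n)) ∧
      ∀ᵐ x ∂m, Tendsto (fun n => g n x) atTop (𝓝 (f x)) := by
  choose g hfg hg using fun n : ℕ =>
    (memLp_one_iff_integrable.2 hf).exists_boundedContinuous_eLpNorm_sub_le ENNReal.one_ne_top
      (ENNReal.inv_ne_zero.2 (ENNReal.natCast_ne_top n))
  have hmeas : TendstoInMeasure m (fun n => (g n : X → E)) atTop f := by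
    refine tendstoInMeasure_of_tendsto_eLpNorm one_ne_zero (fun n => (hg n).1) hf.1 ?_
    refine tendsto_of_tendsto_of_tendsto_of_le_of_le tendsto_const_nhds
      ENNReal.tendsto_inv_nat_nhds_zero (fun _ => zero_le) fun n => ?_
    rw [eLpNorm_sub_comm]
    exact hfg n
  obtain ⟨ns, -, hns⟩ := hmeas.exists_seq_tendsto_ae
  exact ⟨fun n => g (ns n), fun n => (g (ns n)).continuous, hns⟩

lemma exists_seq_continuous_stdSimplex_tendsto_ae {ι : Type*} [Fintype ι] [Nonempty ι]
    [IsFiniteMeasure m] {f : X → ι → ℝ} (hf : Measurable f)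
    (hmem : ∀ x, f x ∈ stdSimplex ℝ ι) :
    ∃ c : ℕ → X → ι → ℝ, (∀ n, Continuous (c n)) ∧ (∀ n x, c n x ∈ stdSimplex ℝ ι) ∧
      ∀ᵐ x ∂m, Tendsto (fun n => c n x) atTop (𝓝 (f x)) := by
  have hf_int : Integrable f m := by
    refine Integrable.of_bound hf.aestronglyMeasurable 1 (ae_of_all _ fun x => ?_)
    exact (pi_norm_le_iff_of_nonneg zero_le_one).2 (norm_apply_le_one_of_mem_stdSimplex (hmem x))
  obtain ⟨g, hg, hgf⟩ := exists_seq_continuous_tendsto_ae hf_int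
  -- The positive weights `|g| + 1 / (n + 1)` converge to `f`, whose coordinates sum to `1`,
  -- so normalizing them does not change the limit.
  let w : ℕ → X → ι → ℝ := fun n x i => |g n x i| + 1 / ((n : ℝ) + 1)
  have hw_pos (n x i) : 0 < w n x i := add_pos_of_nonneg_of_pos (abs_nonneg _) (by positivity)
  have hsum_pos (n x) : 0 < ∑ i, w n x i :=
    Finset.sum_pos (fun i _ => hw_pos n x i) Finset.univ_nonempty
  have hw (n i) : Continuous fun x => w n x i :=
    ((continuous_apply i).comp (hg n)).abs.add continuous_const
  refine ⟨fun n x i => w n x i / ∑ j, w n x j, fun n => continuous_pi fun i =>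
      (hw n i).div (continuous_finsetSum _ fun j _ => hw n j) fun x => (hsum_pos n x).ne',
    fun n x => ⟨fun i => (div_pos (hw_pos n x i) (hsum_pos n x)).le, ?_⟩, ?_⟩
  · rw [← Finset.sum_div, div_self (hsum_pos n x).ne']
  · filter_upwards [hgf] with x hx
    have hwx (i) : Tendsto (fun n => w n x i) atTop (𝓝 (f x i)) := by
      simpa only [abs_of_nonneg ((hmem x).1 i), add_zero] using
        (tendsto_pi_nhds.1 hx i).abs.add tendsto_one_div_add_atTop_nhds_zero_nat
    have hsum : Tendsto (fun n => ∑ j, w n x j) atTop (𝓝 1) := by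
      rw [← (hmem x).2]
      exact tendsto_finsetSum _ fun j _ => hwx j
    refine tendsto_pi_nhds.2 fun i => ?_
    simpa only [div_one, Pi.div_def] using (hwx i).div hsum one_ne_zero

end ContinuousApproximation

lemma tendsto_probabilityMeasure_of_withDensity {Ω : Type*} [TopologicalSpace Ω]
    [MeasurableSpace Ω] [OpensMeasurableSpace Ω] {m : Measure Ω} [IsFiniteMeasure m]
    {ρ : ℕ → Ω → ℝ} {ρ' : Ω → ℝ} {C : ℝ} {κ : ℕ → ProbabilityMeasure Ω}
    {κ' : ProbabilityMeasure Ω} (hρ : ∀ n, AEMeasurable (ρ n) m) (hC : ∀ n x, |ρ n x| ≤ C)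
    (hlim : ∀ᵐ x ∂m, Tendsto (fun n => ρ n x) atTop (𝓝 (ρ' x)))
    (hκ : ∀ n, (κ n : Measure Ω) = m.withDensity fun x => ENNReal.ofReal (ρ n x))
    (hκ' : (κ' : Measure Ω) = m.withDensity fun x => ENNReal.ofReal (ρ' x)) :
    Tendsto κ atTop (𝓝 κ') := by
  have hρ' : AEMeasurable ρ' m := aemeasurable_of_tendsto_metrizable_ae atTop hρ hlim
  have integral_eq {σ : Ω → ℝ} (hσ : AEMeasurable σ m) (φ : Ω → ℝ) :
      ∫ x, φ x ∂m.withDensity (fun x => ENNReal.ofReal (σ x)) = ∫ x, max (σ x) 0 * φ x ∂m := by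
    simp only [integral_withDensity_eq_integral_toReal_smul₀ hσ.ennreal_ofReal
      (ae_of_all _ fun _ => ENNReal.ofReal_lt_top), ENNReal.toReal_ofReal', smul_eq_mul]
  rw [ProbabilityMeasure.tendsto_iff_forall_integral_tendsto]
  intro φ
  simp only [hκ, hκ', integral_eq hρ', fun n => integral_eq (hρ n)]
  refine tendsto_integral_of_dominated_convergence (fun _ => C * ‖φ‖)
    (fun n => (((hρ n).max aemeasurable_const).mul
      φ.continuous.measurable.aemeasurable).aestronglyMeasurable)
    (integrable_const _) (fun n => ae_of_all _ fun x => ?_) ?_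
  · rw [norm_mul]
    refine mul_le_mul ?_ (φ.norm_coe_le_norm x) (norm_nonneg _) ((abs_nonneg _).trans (hC n x))
    rw [Real.norm_of_nonneg (le_max_right _ _)]
    exact max_le ((le_abs_self _).trans (hC n x)) ((abs_nonneg _).trans (hC n x))
  · filter_upwards [hlim] with x hx
    exact (hx.max tendsto_const_nhds).mul tendsto_const_nhds

namespace IsFracPartition

variable {k : ℕ} {f : Fin k → unitInterval → ℝ}

lemma measurable (hf : IsFracPartition k f) (i : Fin k) : Measurable (f i) := hf.1 i

lemma nonneg (hf : IsFracPartition k f) (i : Fin k) (x : unitInterval) : 0 ≤ f i x := hf.2.1 i x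

lemma sum_eq_one (hf : IsFracPartition k f) (x : unitInterval) : ∑ i, f i x = 1 := hf.2.2.1 x

lemma integral_eq (hf : IsFracPartition k f) (i : Fin k) : ∫ x, f i x = 1 / k := hf.2.2.2 i

lemma mem_stdSimplex (hf : IsFracPartition k f) (x : unitInterval) :
    (fun i => f i x) ∈ stdSimplex ℝ (Fin k) := ⟨fun i => hf.nonneg i x, hf.sum_eq_one x⟩

lemma le_one (hf : IsFracPartition k f) (i : Fin k) (x : unitInterval) : f i x ≤ 1 :=
  (mem_Icc_of_mem_stdSimplex (hf.mem_stdSimplex x) i).2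

lemma pos (hf : IsFracPartition k f) : 0 < k := by
  rcases Nat.eq_zero_or_pos k with rfl | hk
  · simpa using hf.sum_eq_one 0
  · exact hk

lemma integrable (hf : IsFracPartition k f) (m : Measure unitInterval) [IsFiniteMeasure m]
    (i : Fin k) : Integrable (f i) m :=
  Integrable.of_bound (hf.measurable i).aestronglyMeasurable 1 <|
    ae_of_all _ fun x => norm_apply_le_one_of_mem_stdSimplex (hf.mem_stdSimplex x) i

lemma norm_mul_le_one (hf : IsFracPartition k f) (i j : Fin k) (p : Sq) :
    ‖f i p.1 * f j p.2‖ ≤ 1 := by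
  rw [Real.norm_of_nonneg (mul_nonneg (hf.nonneg i _) (hf.nonneg j _))]
  exact mul_le_one₀ (hf.le_one i _) (hf.nonneg j _) (hf.le_one j _)

lemma integrable_mul (hf : IsFracPartition k f) (μ : Measure Sq) [IsFiniteMeasure μ]
    (i j : Fin k) : Integrable (fun p : Sq => f i p.1 * f j p.2) μ :=
  Integrable.of_bound (((hf.measurable i).comp measurable_fst).mul
    ((hf.measurable j).comp measurable_snd)).aestronglyMeasurable 1
    (ae_of_all _ (hf.norm_mul_le_one i j))

end IsFracPartition

/-- Corrects a family `c` with values in the standard simplex so that all its members have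
integral `1 / k`, by an affine change of each member. The sup norm of the vector of integrals
gives the largest slope for which the added constants are non-negative. -/
def equalizeIntegrals {k : ℕ} (c : Fin k → unitInterval → ℝ) (i : Fin k) (x : unitInterval) : ℝ :=
  1 / k / ‖fun j => ∫ y, c j y‖ * (c i x - ∫ y, c i y) + 1 / k

section EqualizeIntegrals

variable {k : ℕ}

lemma continuous_equalizeIntegrals {c : Fin k → unitInterval → ℝ} {i : Fin k}
    (hc : Continuous (c i)) : Continuous (equalizeIntegrals c i) :=
  ((hc.sub continuous_const).const_mul _).add continuous_const

lemma isFracPartition_equalizeIntegrals (hk : 0 < k) {c : Fin k → unitInterval → ℝ}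
    (hc : ∀ i, Measurable (c i)) (hmem : ∀ x, (fun i => c i x) ∈ stdSimplex ℝ (Fin k)) :
    IsFracPartition k (equalizeIntegrals c) := by
  have hk' : (k : ℝ) ≠ 0 := Nat.cast_ne_zero.2 hk.ne'
  have hint (i) : Integrable (c i) :=
    Integrable.of_bound (hc i).aestronglyMeasurable 1 <|
      ae_of_all _ fun x => norm_apply_le_one_of_mem_stdSimplex (hmem x) i
  set a : Fin k → ℝ := fun i => ∫ y, c i y with ha
  have hsum_a : ∑ i, a i = 1 := by
    simp only [ha, ← integral_finsetSum _ fun i _ => hint i, (hmem _).2, integral_const,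
      probReal_univ, one_smul]
  refine ⟨fun i => (((hc i).sub_const _).const_mul _).add_const _, fun i x => ?_, fun x => ?_,
    fun i => ?_⟩
  · have hslope : 1 / k / ‖a‖ * a i ≤ 1 / k := by
      rw [div_mul_eq_mul_div, mul_div_assoc]
      exact mul_le_of_le_one_right (by positivity)
        (div_le_one_of_le₀ ((le_abs_self _).trans (norm_le_pi_norm a i)) (norm_nonneg a))
    have hc_nonneg : 0 ≤ 1 / k / ‖a‖ * c i x := mul_nonneg (by positivity) ((hmem x).1 i)
    simp only [equalizeIntegrals, mul_sub]
    linarith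
  · simp only [equalizeIntegrals]
    rw [Finset.sum_add_distrib, ← Finset.mul_sum, Finset.sum_sub_distrib, (hmem x).2, hsum_a]
    simp [hk']
  · simp only [equalizeIntegrals]
    have hdiff : Integrable fun x => c i x - a i := (hint i).sub (integrable_const _)
    have hdiff_zero : ∫ x, (c i x - a i) = 0 := by
      simp [integral_sub (hint i) (integrable_const _), ha]
    rw [integral_add (hdiff.const_mul _) (integrable_const _), integral_const_mul, hdiff_zero]
    simp

lemma tendsto_equalizeIntegrals {c : ℕ → Fin k → unitInterval → ℝ}
    {f : Fin k → unitInterval → ℝ} (hf : IsFracPartition k f)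
    (hint : ∀ i, Tendsto (fun n => ∫ y, c n i y) atTop (𝓝 (∫ y, f i y))) {i : Fin k}
    {x : unitInterval} (hx : Tendsto (fun n => c n i x) atTop (𝓝 (f i x))) :
    Tendsto (fun n => equalizeIntegrals (c n) i x) atTop (𝓝 (f i x)) := by
  have hk : (1 / k : ℝ) ≠ 0 := one_div_ne_zero (Nat.cast_ne_zero.2 hf.pos.ne')
  have : Nonempty (Fin k) := ⟨i⟩
  simp only [hf.integral_eq] at hint
  have hnorm : Tendsto (fun n => ‖fun j => ∫ y, c n j y‖) atTop (𝓝 (1 / k)) := by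
    simpa only [pi_norm_const, Real.norm_of_nonneg (one_div_nonneg.2 k.cast_nonneg)] using
      (tendsto_pi_nhds.2 hint).norm
  have hlim := (((tendsto_const_nhds (x := (1 / k : ℝ))).div hnorm hk).mul
    (hx.sub (hint i))).add_const (1 / k : ℝ)
  rwa [div_self hk, one_mul, sub_add_cancel] at hlim

end EqualizeIntegrals

lemma IsFracPartition.exists_seq_continuous_tendsto_ae {k : ℕ} {f : Fin k → unitInterval → ℝ}
    (hf : IsFracPartition k f) (m : Measure unitInterval) [IsFiniteMeasure m] :
    ∃ c : ℕ → Fin k → unitInterval → ℝ, (∀ n, IsFracPartition k (c n)) ∧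
      (∀ n i, Continuous (c n i)) ∧
      ∀ᵐ x ∂m, ∀ i, Tendsto (fun n => c n i x) atTop (𝓝 (f i x)) := by
  have : Nonempty (Fin k) := ⟨⟨0, hf.pos⟩⟩
  obtain ⟨c, hc, hmem, hlim⟩ := exists_seq_continuous_stdSimplex_tendsto_ae
    (m := volume + m) (measurable_pi_lambda _ hf.measurable) hf.mem_stdSimplex
  simp only [tendsto_pi_nhds, ae_add_measure_iff] at hlim
  have hci (n i) : Continuous fun x => c n x i := (continuous_apply i).comp (hc n)
  have hint (i) : Tendsto (fun n => ∫ x, c n x i) atTop (𝓝 (∫ x, f i x)) :=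
    tendsto_integral_of_dominated_convergence (fun _ => 1)
      (fun n => (hci n i).aestronglyMeasurable) (integrable_const 1)
      (fun n => ae_of_all _ fun x => norm_apply_le_one_of_mem_stdSimplex (hmem n x) i)
      (hlim.1.mono fun x hx => hx i)
  exact ⟨fun n => equalizeIntegrals fun i x => c n x i,
    fun n => isFracPartition_equalizeIntegrals hf.pos (fun i => (hci n i).measurable) (hmem n),
    fun n i => continuous_equalizeIntegrals (hci n i),
    hlim.2.mono fun x hx i => tendsto_equalizeIntegrals hf hint (hx i)⟩

/-- The matrix `(∫ f_i(x) f_j(y) dμ(x,y))_{i,j}` of a family of functions `f`; the `k`-shape is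
the closure of the set of these matrices over fractional partitions `f`. -/
def densityMatrix {ι : Type*} (μ : Measure Sq) (f : ι → unitInterval → ℝ) : Matrix ι ι ℝ :=
  .of fun i j => ∫ p, f i p.1 * f j p.2 ∂μ

section DensityMatrix

variable {k : ℕ}

lemma kShape_eq_closure_image (μ : Measure Sq) (k : ℕ) :
    kShape μ k = closure (densityMatrix μ '' {f | IsFracPartition k f}) := by
  unfold kShape
  congr 1
  ext M
  simp only [Set.mem_ofPred_eq, Set.mem_image, ← Matrix.ext_iff, densityMatrix, Matrix.of_apply,
    eq_comm]

lemma densityMatrix_mem_kShape {f : Fin k → unitInterval → ℝ} (μ : Measure Sq)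
    (hf : IsFracPartition k f) : densityMatrix μ f ∈ kShape μ k :=
  subset_closure ⟨f, hf, fun _ _ => rfl⟩

lemma tendsto_densityMatrix {μ : Measure Sq} [IsFiniteMeasure μ]
    {c : ℕ → Fin k → unitInterval → ℝ} {f : Fin k → unitInterval → ℝ}
    (hc : ∀ n, IsFracPartition k (c n))
    (hfst : ∀ᵐ x ∂μ.fst, ∀ i, Tendsto (fun n => c n i x) atTop (𝓝 (f i x)))
    (hsnd : ∀ᵐ x ∂μ.snd, ∀ i, Tendsto (fun n => c n i x) atTop (𝓝 (f i x))) :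
    Tendsto (fun n => densityMatrix μ (c n)) atTop (𝓝 (densityMatrix μ f)) := by
  refine tendsto_pi_nhds.2 fun i => tendsto_pi_nhds.2 fun j => ?_
  refine tendsto_integral_of_dominated_convergence (fun _ => 1)
    (fun n => ((hc n).integrable_mul μ i j).aestronglyMeasurable) (integrable_const 1)
    (fun n => ae_of_all _ ((hc n).norm_mul_le_one i j)) ?_
  filter_upwards [ae_of_ae_map measurable_fst.aemeasurable hfst,
    ae_of_ae_map measurable_snd.aemeasurable hsnd] with p h₁ h₂
  exact (h₁ i).mul (h₂ j)

lemma kShape_eq_closure_image_continuous (μ : Measure Sq) [IsFiniteMeasure μ] (k : ℕ) :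
    kShape μ k =
      closure (densityMatrix μ '' {c | IsFracPartition k c ∧ ∀ i, Continuous (c i)}) := by
  rw [kShape_eq_closure_image]
  refine (closure_minimal ?_ isClosed_closure).antisymm
    (closure_mono (Set.image_mono fun _ hc => hc.1))
  rintro _ ⟨f, hf, rfl⟩
  obtain ⟨c, hc, hcont, hlim⟩ := hf.exists_seq_continuous_tendsto_ae (μ.fst + μ.snd)
  rw [ae_add_measure_iff] at hlim
  exact mem_closure_of_tendsto (tendsto_densityMatrix hc hlim.1 hlim.2)
    (Eventually.of_forall fun n => ⟨c n, ⟨hc n, hcont n⟩, rfl⟩)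

end DensityMatrix

instance SGraphon.isProbabilityMeasure_toMeasure (μ : SGraphon) :
    IsProbabilityMeasure μ.toMeasure := μ.1.2

lemma SGraphon.integral_swap (μ : SGraphon) (g : Sq → ℝ) :
    ∫ p, g p.swap ∂μ.toMeasure = ∫ p, g p ∂μ.toMeasure := by
  conv_rhs => rw [← show μ.toMeasure.map Prod.swap = μ.toMeasure from μ.2]
  exact (integral_map_equiv MeasurableEquiv.prodComm g).symm

lemma SGraphon.continuous_densityMatrix {ι : Type*} {f : ι → unitInterval → ℝ}
    (hf : ∀ i, Continuous (f i)) : Continuous fun ν : SGraphon => densityMatrix ν.toMeasure f := by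
  refine continuous_pi fun i => continuous_pi fun j => ?_
  let φ : BoundedContinuousFunction Sq ℝ := BoundedContinuousFunction.mkOfCompact
    ⟨fun p => f i p.1 * f j p.2, ((hf i).comp continuous_fst).mul ((hf j).comp continuous_snd)⟩
  exact (ProbabilityMeasure.continuous_integral_boundedContinuousFunction φ).comp
    continuous_subtype_val

lemma isClosed_Mstar (k : ℕ) : IsClosed (Mstar k) := by
  have hentry (i j) : Continuous fun M : Matrix (Fin k) (Fin k) ℝ => M i j :=
    continuous_id.matrix_elem i j
  have hsymm : IsClosed {M : Matrix (Fin k) (Fin k) ℝ | M.IsSymm} :=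
    isClosed_eq continuous_id.matrix_transpose continuous_id
  have hnonneg : IsClosed {M : Matrix (Fin k) (Fin k) ℝ | ∀ i j, 0 ≤ M i j} := by
    simp only [Set.ofPred_forall]
    exact isClosed_iInter fun i => isClosed_iInter fun j =>
      isClosed_le continuous_const (hentry i j)
  have hsum : IsClosed {M : Matrix (Fin k) (Fin k) ℝ | ∑ i, ∑ j, M i j = 1} :=
    isClosed_eq (continuous_finsetSum _ fun i _ => continuous_finsetSum _ fun j _ => hentry i j)
      continuous_const
  exact hsymm.inter (hnonneg.inter hsum)

lemma densityMatrix_mem_Mstar {k : ℕ} (μ : SGraphon) {f : Fin k → unitInterval → ℝ}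
    (hf : IsFracPartition k f) : densityMatrix μ.toMeasure f ∈ Mstar k := by
  refine ⟨?_, fun i j => integral_nonneg fun p => mul_nonneg (hf.nonneg i _) (hf.nonneg j _), ?_⟩
  · ext i j
    simp only [densityMatrix, Matrix.transpose_apply, Matrix.of_apply]
    rw [← μ.integral_swap]
    simp only [Prod.fst_swap, Prod.snd_swap, mul_comm]
  · have hint := hf.integrable_mul μ.toMeasure
    simp only [densityMatrix, Matrix.of_apply]
    simp only [← integral_finsetSum _ fun j _ => hint _ j]
    rw [← integral_finsetSum _ fun i _ => integrable_finsetSum _ fun j _ => hint i j]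
    simp only [← Finset.mul_sum, hf.sum_eq_one, mul_one, integral_const, probReal_univ, one_smul]

lemma kShape_subset_Mstar (μ : SGraphon) (k : ℕ) : kShape μ.toMeasure k ⊆ Mstar k := by
  rw [kShape_eq_closure_image]
  refine closure_minimal ?_ (isClosed_Mstar k)
  rintro _ ⟨f, hf, rfl⟩
  exact densityMatrix_mem_Mstar μ hf

/-- The averaging operator with kernel `f`, through which `Φ(f,·)` acts on test functions. For
fairly distributed `f` it is bistochastic. -/
def kernelAverage (f : Sq → ℝ) (a : unitInterval → ℝ) (x : unitInterval) : ℝ := ∫ u, f (x, u) * a u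

lemma abs_phiFn_le {f : Sq → ℝ} {C : ℝ} (hC : ∀ p, |f p| ≤ C) (μ : Measure Sq)
    [IsFiniteMeasure μ] (p : Sq) : |phiFn f μ p| ≤ C * C * μ.real Set.univ :=
  norm_integral_le_of_norm_le_const (f := fun q : Sq => f (q.1, p.1) * f (q.2, p.2)) <|
    ae_of_all _ fun q => by
      rw [norm_mul]
      exact mul_le_mul (hC _) (hC _) (abs_nonneg _) ((abs_nonneg _).trans (hC (q.1, p.1)))

namespace FairlyDistributed

variable {f : Sq → ℝ}

lemma measurable_phiFn (hf : FairlyDistributed f) (μ : Measure Sq) [SFinite μ] :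
    Measurable (phiFn f μ) := by
  have hfm := hf.measurable
  have hprod : Measurable fun z : Sq × Sq => f (z.2.1, z.1.1) * f (z.2.2, z.1.2) := by fun_prop
  exact (hprod.stronglyMeasurable.integral_prod_right' (ν := μ)).measurable

lemma integral_mul_PhiMeas (hf : FairlyDistributed f) (μ : Measure Sq) [IsFiniteMeasure μ]
    {a b : unitInterval → ℝ} (ha : Integrable a) (hb : Integrable b) :
    ∫ p, a p.1 * b p.2 ∂PhiMeas f μ =
      ∫ q, kernelAverage f a q.1 * kernelAverage f b q.2 ∂μ := by
  obtain ⟨C, hC⟩ := hf.bounded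
  have hC' (p) : ‖f p‖ ≤ C := by rw [Real.norm_of_nonneg (hf.nonneg p)]; exact hC p
  have hfm := hf.measurable
  have hint : Integrable (Function.uncurry fun p q : Sq =>
      f (q.1, p.1) * f (q.2, p.2) * (a p.1 * b p.2)) (volume.prod μ) := by
    simp only [Function.uncurry_def]
    refine ((ha.mul_prod hb).comp_fst μ).bdd_mul (c := C * C)
      (by fun_prop : Measurable _).aestronglyMeasurable (ae_of_all _ fun z => ?_)
    rw [norm_mul]
    exact mul_le_mul (hC' _) (hC' _) (norm_nonneg _) ((norm_nonneg _).trans (hC' z.1))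
  calc ∫ p, a p.1 * b p.2 ∂PhiMeas f μ
      = ∫ p : Sq, phiFn f μ p * (a p.1 * b p.2) := by
        rw [PhiMeas, integral_withDensity_eq_integral_toReal_smul
          (hf.measurable_phiFn μ).ennreal_ofReal (ae_of_all _ fun _ => ENNReal.ofReal_lt_top)]
        congr 1 with p
        rw [smul_eq_mul, ENNReal.toReal_ofReal]
        exact integral_nonneg fun q => mul_nonneg (hf.nonneg _) (hf.nonneg _)
    _ = ∫ p : Sq, ∫ q : Sq, f (q.1, p.1) * f (q.2, p.2) * (a p.1 * b p.2) ∂μ := by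
        simp only [phiFn, integral_mul_const]
    _ = ∫ q : Sq, (∫ p : Sq, f (q.1, p.1) * f (q.2, p.2) * (a p.1 * b p.2)) ∂μ :=
        integral_integral_swap hint
    _ = ∫ q, kernelAverage f a q.1 * kernelAverage f b q.2 ∂μ := by
        congr 1 with q
        simp only [kernelAverage]
        rw [← integral_prod_mul, Measure.volume_eq_prod]
        congr 1 with p
        exact mul_mul_mul_comm _ _ _ _

lemma densityMatrix_PhiMeas {ι : Type*} (hf : FairlyDistributed f) (μ : Measure Sq)
    [IsFiniteMeasure μ] {p : ι → unitInterval → ℝ} (hp : ∀ i, Integrable (p i)) :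
    densityMatrix (PhiMeas f μ) p = densityMatrix μ fun i => kernelAverage f (p i) := by
  ext i j
  exact hf.integral_mul_PhiMeas μ (hp i) (hp j)

lemma isFracPartition_kernelAverage (hf : FairlyDistributed f) {k : ℕ}
    {p : Fin k → unitInterval → ℝ} (hp : IsFracPartition k p) :
    IsFracPartition k fun i => kernelAverage f (p i) := by
  obtain ⟨C, hC⟩ := hf.bounded
  have hmeas (i) : Measurable fun q : Sq => f q * p i q.2 :=
    hf.measurable.mul ((hp.measurable i).comp measurable_snd)
  have hbound (i) (q : Sq) : ‖f q * p i q.2‖ ≤ C := by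
    rw [Real.norm_of_nonneg (mul_nonneg (hf.nonneg q) (hp.nonneg i _))]
    exact (mul_le_of_le_one_right (hf.nonneg q) (hp.le_one i _)).trans (hC q)
  refine ⟨fun i => ((hmeas i).stronglyMeasurable.integral_prod_right' (ν := volume)).measurable,
    fun i x => integral_nonneg fun u => mul_nonneg (hf.nonneg _) (hp.nonneg i u),
    fun x => ?_, fun i => ?_⟩
  · have hint (i) : Integrable fun u => f (x, u) * p i u :=
      Integrable.of_bound ((hmeas i).comp measurable_prodMk_left).aestronglyMeasurable C
        (ae_of_all _ fun u => hbound i (x, u))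
    simp only [kernelAverage]
    rw [← integral_finsetSum _ fun i _ => hint i]
    simp only [← Finset.mul_sum, hp.sum_eq_one, mul_one, hf.row]
  · have hint : Integrable (Function.uncurry fun x u => f (x, u) * p i u) :=
      Integrable.of_bound (hmeas i).aestronglyMeasurable C (ae_of_all _ (hbound i))
    calc ∫ x, kernelAverage f (p i) x = ∫ u, ∫ x, f (x, u) * p i u := integral_integral_swap hint
      _ = 1 / k := by simp only [integral_mul_const, hf.col, one_mul, hp.integral_eq]

lemma isProbabilityMeasure_PhiMeas (hf : FairlyDistributed f) (μ : Measure Sq)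
    [IsProbabilityMeasure μ] : IsProbabilityMeasure (PhiMeas f μ) := by
  have hmass : (PhiMeas f μ).real Set.univ = 1 := by
    simpa [kernelAverage, hf.row] using
      hf.integral_mul_PhiMeas μ (integrable_const 1) (integrable_const 1)
  exact ⟨(ENNReal.toReal_eq_one_iff _).1 hmass⟩

end FairlyDistributed

lemma SGraphon.phiFn_swap (μ : SGraphon) (f : Sq → ℝ) (p : Sq) :
    phiFn f μ.toMeasure p.swap = phiFn f μ.toMeasure p := by
  rw [phiFn, phiFn, ← μ.integral_swap]
  simp only [Prod.fst_swap, Prod.snd_swap, mul_comm]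

lemma FairlyDistributed.isSymmSq_PhiMeas {f : Sq → ℝ} (hf : FairlyDistributed f) (μ : SGraphon) :
    IsSymmSq (PhiMeas f μ.toMeasure) := by
  have hswap : MeasurePreserving (Prod.swap : Sq → Sq) := Measure.measurePreserving_swap
  refine Measure.ext fun s hs => ?_
  rw [Measure.map_apply measurable_swap hs, PhiMeas, withDensity_apply _ (measurable_swap hs),
    withDensity_apply _ hs, ← hswap.setLIntegral_comp_preimage hs
      (hf.measurable_phiFn μ.toMeasure).ennreal_ofReal]
  simp only [μ.phiFn_swap]

/-- `Φ(f,μ)` as an s-graphon, for fairly distributed `f` and an s-graphon `μ`. -/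
def SGraphon.Phi (μ : SGraphon) {f : Sq → ℝ} (hf : FairlyDistributed f) : SGraphon :=
  ⟨⟨PhiMeas f μ.toMeasure, hf.isProbabilityMeasure_PhiMeas μ.toMeasure⟩, hf.isSymmSq_PhiMeas μ⟩

lemma kShape_subset_of_mem_shapeM (μ : Measure Sq) [IsFiniteMeasure μ] {ν : SGraphon}
    (hν : ν ∈ shapeM μ) (k : ℕ) : kShape ν.toMeasure k ⊆ kShape μ k := by
  rw [kShape_eq_closure_image_continuous ν.toMeasure]
  refine closure_minimal ?_ isClosed_closure
  rintro _ ⟨p, ⟨hp, hp_cont⟩, rfl⟩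
  have hclosed : IsClosed {κ : SGraphon | densityMatrix κ.toMeasure p ∈ kShape μ k} :=
    isClosed_closure.preimage (SGraphon.continuous_densityMatrix hp_cont)
  refine closure_minimal ?_ hclosed hν
  rintro κ ⟨f, hf, -, hκ⟩
  rw [Set.mem_ofPred_eq, hκ, hf.densityMatrix_PhiMeas μ fun i => hp.integrable volume i]
  exact densityMatrix_mem_kShape μ (hf.isFracPartition_kernelAverage hp)

/-- The kernel `k ∑ᵢ cᵢ(x) pᵢ(u)`, which redistributes the mass of each part of the fractional
partition `c` along the corresponding part of `p`. -/
def partitionKernel {k : ℕ} (c p : Fin k → unitInterval → ℝ) (q : Sq) : ℝ :=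
  k * ∑ i, c i q.1 * p i q.2

/-- The density `k² ∑ᵢⱼ Mᵢⱼ pᵢ(u) pⱼ(v)`: the step density of `μ_M` with the indicators of the
grid intervals replaced by the members of `p`. -/
def blowUpDensity {k : ℕ} (M : Matrix (Fin k) (Fin k) ℝ) (p : Fin k → unitInterval → ℝ)
    (q : Sq) : ℝ :=
  (k : ℝ) ^ 2 * ∑ i, ∑ j, M i j * (p i q.1 * p j q.2)

section PartitionKernel

variable {k : ℕ} {c p : Fin k → unitInterval → ℝ}

lemma continuous_partitionKernel (hc : ∀ i, Continuous (c i)) (hp : ∀ i, Continuous (p i)) :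
    Continuous (partitionKernel c p) :=
  (continuous_finsetSum _ fun i _ =>
    ((hc i).comp continuous_fst).mul ((hp i).comp continuous_snd)).const_mul _

lemma partitionKernel_nonneg (hc : IsFracPartition k c) (hp : IsFracPartition k p) (q : Sq) :
    0 ≤ partitionKernel c p q :=
  mul_nonneg k.cast_nonneg <|
    Finset.sum_nonneg fun i _ => mul_nonneg (hc.nonneg i _) (hp.nonneg i _)

lemma partitionKernel_le (hc : IsFracPartition k c) (hp : IsFracPartition k p) (q : Sq) :
    partitionKernel c p q ≤ k := by
  refine mul_le_of_le_one_right k.cast_nonneg ?_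
  rw [← hc.sum_eq_one q.1]
  exact Finset.sum_le_sum fun i _ => mul_le_of_le_one_right (hc.nonneg i _) (hp.le_one i _)

lemma fairlyDistributed_partitionKernel (hc : IsFracPartition k c) (hp : IsFracPartition k p) :
    FairlyDistributed (partitionKernel c p) where
  measurable := (Finset.measurable_sum _ fun i _ =>
    ((hc.measurable i).comp measurable_fst).mul
      ((hp.measurable i).comp measurable_snd)).const_mul _
  nonneg := partitionKernel_nonneg hc hp
  bounded := ⟨k, partitionKernel_le hc hp⟩
  row x := by
    simp only [partitionKernel]
    rw [integral_const_mul, integral_finsetSum _ fun i _ => (hp.integrable volume i).const_mul _]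
    simp only [integral_const_mul, hp.integral_eq, ← Finset.sum_mul, hc.sum_eq_one, one_mul]
    exact mul_one_div_cancel (Nat.cast_ne_zero.2 hc.pos.ne')
  col u := by
    simp only [partitionKernel]
    rw [integral_const_mul, integral_finsetSum _ fun i _ => (hc.integrable volume i).mul_const _]
    simp only [integral_mul_const, hc.integral_eq, ← Finset.mul_sum, hp.sum_eq_one, mul_one]
    exact mul_one_div_cancel (Nat.cast_ne_zero.2 hc.pos.ne')

lemma partitionKernel_mul_partitionKernel (c p : Fin k → unitInterval → ℝ) (q r : Sq) :
    partitionKernel c p (q.1, r.1) * partitionKernel c p (q.2, r.2) =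
      blowUpDensity (.of fun i j => c i q.1 * c j q.2) p r := by
  simp only [partitionKernel, blowUpDensity, Matrix.of_apply]
  rw [mul_mul_mul_comm, Finset.sum_mul_sum, pow_two]
  simp only [mul_mul_mul_comm]

lemma measurable_blowUpDensity (hp : ∀ i, Measurable (p i)) (M : Matrix (Fin k) (Fin k) ℝ) :
    Measurable (blowUpDensity M p) :=
  (Finset.measurable_sum _ fun i _ => Finset.measurable_sum _ fun j _ =>
    (((hp i).comp measurable_fst).mul ((hp j).comp measurable_snd)).const_mul _).const_mul _

lemma phiFn_partitionKernel (hc : IsFracPartition k c) (p : Fin k → unitInterval → ℝ)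
    (μ : Measure Sq) [IsFiniteMeasure μ] :
    phiFn (partitionKernel c p) μ = blowUpDensity (densityMatrix μ c) p := by
  ext r
  have hint (i j) : Integrable (fun q : Sq => c i q.1 * c j q.2 * (p i r.1 * p j r.2)) μ :=
    (hc.integrable_mul μ i j).mul_const _
  simp only [phiFn, partitionKernel_mul_partitionKernel]
  simp only [blowUpDensity, densityMatrix, Matrix.of_apply, ← integral_mul_const]
  rw [integral_const_mul,
    integral_finsetSum _ fun i _ => integrable_finsetSum _ fun j _ => hint i j]
  simp only [integral_finsetSum _ fun j _ => hint _ j]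

lemma tendsto_blowUpDensity {N : ℕ → Matrix (Fin k) (Fin k) ℝ} {M : Matrix (Fin k) (Fin k) ℝ}
    {p : ℕ → Fin k → unitInterval → ℝ} {p' : Fin k → unitInterval → ℝ} {q : Sq}
    (hN : Tendsto N atTop (𝓝 M)) (h₁ : ∀ i, Tendsto (fun n => p n i q.1) atTop (𝓝 (p' i q.1)))
    (h₂ : ∀ i, Tendsto (fun n => p n i q.2) atTop (𝓝 (p' i q.2))) :
    Tendsto (fun n => blowUpDensity (N n) (p n) q) atTop (𝓝 (blowUpDensity M p' q)) :=
  (tendsto_finsetSum _ fun i _ => tendsto_finsetSum _ fun j _ =>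
    (tendsto_pi_nhds.1 (tendsto_pi_nhds.1 hN i) j).mul ((h₁ i).mul (h₂ j))).const_mul _

lemma tendsto_Phi_partitionKernel (μ : SGraphon) {ν : SGraphon}
    {c p : ℕ → Fin k → unitInterval → ℝ} {M : Matrix (Fin k) (Fin k) ℝ}
    {p' : Fin k → unitInterval → ℝ} (hc : ∀ n, IsFracPartition k (c n))
    (hp : ∀ n, IsFracPartition k (p n))
    (hM : Tendsto (fun n => densityMatrix μ.toMeasure (c n)) atTop (𝓝 M))
    (hp' : ∀ᵐ u, ∀ i, Tendsto (fun n => p n i u) atTop (𝓝 (p' i u)))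
    (hν : ν.toMeasure = volume.withDensity fun q => ENNReal.ofReal (blowUpDensity M p' q)) :
    Tendsto (fun n => μ.Phi (fairlyDistributed_partitionKernel (hc n) (hp n))) atTop (𝓝 ν) := by
  refine tendsto_subtype_rng.2 <| tendsto_probabilityMeasure_of_withDensity
    (ρ := fun n => phiFn (partitionKernel (c n) (p n)) μ.toMeasure)
    (fun n => ((fairlyDistributed_partitionKernel (hc n) (hp n)).measurable_phiFn _).aemeasurable)
    (fun n => abs_phiFn_le (C := k) (fun q => ?_) μ.toMeasure) ?_ (fun n => rfl) hν
  · rw [abs_of_nonneg (partitionKernel_nonneg (hc n) (hp n) q)]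
    exact partitionKernel_le (hc n) (hp n) q
  · have hfst : ∀ᵐ q : Sq, ∀ i, Tendsto (fun n => p n i q.1) atTop (𝓝 (p' i q.1)) :=
      Measure.quasiMeasurePreserving_fst.ae hp'
    have hsnd : ∀ᵐ q : Sq, ∀ i, Tendsto (fun n => p n i q.2) atTop (𝓝 (p' i q.2)) :=
      Measure.quasiMeasurePreserving_snd.ae hp'
    filter_upwards [hfst, hsnd] with q h₁ h₂
    simp only [phiFn_partitionKernel (hc _)]
    exact tendsto_blowUpDensity hM h₁ h₂

end PartitionKernel

/-- The partition of `[0,1]` into the `k` grid intervals, as a fractional partition. -/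
def gridPartition (k : ℕ) (i : Fin k) : unitInterval → ℝ := (Ik k i).indicator 1

section GridPartition

variable {k : ℕ}

lemma mem_Ik_iff (hk : 0 < k) {i : Fin k} {u : unitInterval} :
    u ∈ Ik k i ↔ gridIdx k hk u = i := by
  have hk' : (0 : ℝ) < k := Nat.cast_pos.2 hk
  have hu : 0 ≤ (u : ℝ) * k := mul_nonneg u.2.1 hk'.le
  have hidx : gridIdx k hk u = i ↔ min ⌊(u : ℝ) * k⌋₊ (k - 1) = i := Fin.ext_iff
  rw [hidx, Ik]
  split_ifs with hi
  · have hmin : min ⌊(u : ℝ) * k⌋₊ (k - 1) = i ↔ (i : ℕ) ≤ ⌊(u : ℝ) * k⌋₊ := by omega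
    rw [hmin, Nat.le_floor_iff hu, Set.mem_preimage, Set.mem_Icc, div_le_iff₀ hk',
      and_iff_left u.2.2]
  · have hmin : min ⌊(u : ℝ) * k⌋₊ (k - 1) = i ↔ ⌊(u : ℝ) * k⌋₊ = i := by omega
    rw [hmin, Nat.floor_eq_iff hu, Set.mem_preimage, Set.mem_Ico, div_le_iff₀ hk',
      lt_div_iff₀ hk']

lemma measurableSet_Ik (i : Fin k) : MeasurableSet (Ik k i) := by
  unfold Ik
  split_ifs
  · exact measurable_subtype_coe measurableSet_Icc
  · exact measurable_subtype_coe measurableSet_Ico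

lemma volume_real_Ik (i : Fin k) : (volume : Measure unitInterval).real (Ik k i) = 1 / k := by
  have hk : (0 : ℝ) < k := Nat.cast_pos.2 i.pos
  have hleft : (0 : ℝ) ≤ i / k := by positivity
  have hlen : ((i : ℝ) + 1) / k - i / k = 1 / k := by rw [← sub_div, add_sub_cancel_left]
  have hle : (i : ℝ) / k ≤ ((i : ℝ) + 1) / k := by gcongr; exact le_add_of_nonneg_right zero_le_one
  have hright : ((i : ℝ) + 1) / k ≤ 1 := (div_le_one hk).2 (mod_cast i.2)
  rw [measureReal_def, unitInterval.volume_apply, ← measureReal_def, Ik]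
  split_ifs with hi
  · have hlast : ((i : ℝ) + 1) / k = 1 := (div_eq_one_iff_eq hk.ne').2 (mod_cast hi)
    rw [hlast] at hlen hle
    rw [Subtype.image_preimage_coe, Set.inter_eq_right.2 (Set.Icc_subset_Icc_left hleft),
      Real.volume_real_Icc_of_le hle, hlen]
  · have hsub : Set.Ico ((i : ℝ) / k) ((i + 1) / k) ⊆ Set.Icc 0 1 :=
      fun x hx => ⟨hleft.trans hx.1, hx.2.le.trans hright⟩
    rw [Subtype.image_preimage_coe, Set.inter_eq_right.2 hsub, Real.volume_real_Ico_of_le hle,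
      hlen]

lemma gridPartition_apply (hk : 0 < k) (i : Fin k) (u : unitInterval) :
    gridPartition k i u = if gridIdx k hk u = i then 1 else 0 := by
  classical
  simp only [gridPartition, Set.indicator_apply, mem_Ik_iff hk, Pi.one_apply]

lemma isFracPartition_gridPartition (hk : 0 < k) : IsFracPartition k (gridPartition k) := by
  refine ⟨fun i => measurable_one.indicator (measurableSet_Ik i),
    fun i x => Set.indicator_nonneg (fun _ _ => zero_le_one) x, fun x => ?_, fun i => ?_⟩
  · simp only [gridPartition_apply hk, Finset.sum_ite_eq, Finset.mem_univ, if_true]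
  · rw [gridPartition, integral_indicator_one (measurableSet_Ik i), volume_real_Ik]

lemma blowUpDensity_gridPartition (hk : 0 < k) (M : Matrix (Fin k) (Fin k) ℝ) (q : Sq) :
    blowUpDensity M (gridPartition k) q =
      (k : ℝ) ^ 2 * M (gridIdx k hk q.1) (gridIdx k hk q.2) := by
  simp [blowUpDensity, gridPartition_apply hk]

lemma muM_eq_withDensity_blowUpDensity (hk : 0 < k) (M : Matrix (Fin k) (Fin k) ℝ) :
    muM M =
      volume.withDensity fun q => ENNReal.ofReal (blowUpDensity M (gridPartition k) q) := by
  simp only [muM, dif_pos hk, blowUpDensity_gridPartition hk]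

lemma densityMatrix_muM (hk : 0 < k) {M : Matrix (Fin k) (Fin k) ℝ} (hM : ∀ i j, 0 ≤ M i j) :
    densityMatrix (muM M) (gridPartition k) = M := by
  have hk' : (k : ℝ) ≠ 0 := Nat.cast_ne_zero.2 hk.ne'
  have hp := isFracPartition_gridPartition hk
  ext i j
  have hstep (q : Sq) : (ENNReal.ofReal (blowUpDensity M (gridPartition k) q)).toReal •
      (gridPartition k i q.1 * gridPartition k j q.2) =
      (k : ℝ) ^ 2 * M i j * (gridPartition k i q.1 * gridPartition k j q.2) := by
    rw [blowUpDensity_gridPartition hk,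
      ENNReal.toReal_ofReal (mul_nonneg (sq_nonneg _) (hM _ _))]
    simp only [gridPartition_apply hk, smul_eq_mul]
    split_ifs <;> simp [*]
  calc densityMatrix (muM M) (gridPartition k) i j
      = ∫ q : Sq, (k : ℝ) ^ 2 * M i j * (gridPartition k i q.1 * gridPartition k j q.2) := by
        rw [densityMatrix, Matrix.of_apply, muM_eq_withDensity_blowUpDensity hk,
          integral_withDensity_eq_integral_toReal_smul
            (measurable_blowUpDensity hp.measurable M).ennreal_ofReal
            (ae_of_all _ fun _ => ENNReal.ofReal_lt_top)]
        simp only [hstep]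
    _ = (k : ℝ) ^ 2 * M i j * (1 / k * (1 / k)) := by
        rw [integral_const_mul, Measure.volume_eq_prod, integral_prod_mul (gridPartition k i),
          hp.integral_eq, hp.integral_eq]
    _ = M i j := by field_simp

end GridPartition

lemma mem_shape_of_mem_kShape {k : ℕ} (hk : 0 < k) {μ ν : SGraphon}
    {M : Matrix (Fin k) (Fin k) ℝ} (hM : M ∈ kShape μ.toMeasure k) (hν : ν.toMeasure = muM M) :
    ν ∈ shape μ := by
  rw [kShape_eq_closure_image_continuous] at hM
  obtain ⟨N, hN, hNM⟩ := 
    (mem_closure_iff_seq_limit (X := Fin k → Fin k → ℝ)).1 hM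
  choose c hc hcN using hN
  obtain rfl : (fun n => densityMatrix μ.toMeasure (c n)) = N := funext hcN
  obtain ⟨p, hp, hp_cont, hp_lim⟩ :=
    (isFracPartition_gridPartition hk).exists_seq_continuous_tendsto_ae volume
  have hlim := tendsto_Phi_partitionKernel μ (fun n => (hc n).1) hp hNM hp_lim
    (hν.trans (muM_eq_withDensity_blowUpDensity hk M))
  exact mem_closure_of_tendsto hlim <| Eventually.of_forall fun n =>
    ⟨_, fairlyDistributed_partitionKernel (hc n).1 (hp n),
      continuous_partitionKernel (hc n).2 (hp_cont n), rfl⟩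

/-- Lemma `lem:shapes-b`. For every s-graphon `μ` and every `k ∈ ℕ`,
`C̃(μ,k) = C(μ) ∩ {μ_M : M ∈ M_k^*}`. -/
theorem stmt2 (μ : SGraphon) (k : ℕ) (hk : 0 < k) :
    kShapeTilde μ.toMeasure k =
      shape μ ∩ {ν : SGraphon | ∃ M ∈ Mstar k, ν.toMeasure = muM M} := by
  ext ν
  constructor
  · rintro ⟨M, hM, hν⟩
    exact ⟨mem_shape_of_mem_kShape hk hM hν, M, kShape_subset_Mstar μ k hM, hν⟩
  · rintro ⟨hshape, M, ⟨-, hM_nonneg, -⟩, hν⟩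
    have hM_eq : M = densityMatrix ν.toMeasure (gridPartition k) := by
      rw [hν, densityMatrix_muM hk hM_nonneg]
    refine ⟨M, kShape_subset_of_mem_shapeM μ.toMeasure hshape k ?_, hν⟩
    rw [hM_eq]
    exact densityMatrix_mem_kShape _ (isFracPartition_gridPartition hk)

end
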